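/- For u ∈ C²(S Ω̄), where Ω ⊂ ℝ² is a smooth bounded domain with unit sphere bundle SΩ = Ω × S¹, the Pestov identity holds: ‖VXu‖²_{L²(SΩ)} = ‖XVu‖²_{L²(SΩ)} + ‖Xu‖²_{L²(SΩ)} + ⟨∇_T u, Vu⟩_{L²(∂SΩ)}, where X u(x, v_θ) = v_θ · ∇_x u(x, v_θ), V u(x, v_θ) = ∂_θ u(x, v_θ) with v_θ = (cos θ, sin θ), and ∇_T = ⟨ν^⊥, ∇_x⟩ is the tangential derivative along ∂Ω. -/

import Mathlib

open MeasureTheory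

/-- The geodesic vector field `X` on the unit sphere bundle `Ω × S¹`:
`Xu(x, v_θ) = v_θ · ∇_x u(x, v_θ)`. -/
noncomputable def Xop (u : ℝ × ℝ → ℝ → ℝ) (x : ℝ × ℝ) (θ : ℝ) : ℝ :=
  Real.cos θ * fderiv ℝ (fun y => u y θ) x (1, 0) +
    Real.sin θ * fderiv ℝ (fun y => u y θ) x (0, 1)

/-- The vertical vector field `V`: `Vu(x, v_θ) = ∂_θ u(x, v_θ)`. -/
noncomputable def Vop (u : ℝ × ℝ → ℝ → ℝ) (x : ℝ × ℝ) (θ : ℝ) : ℝ :=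
  deriv (u x) θ

/-- The Jacobian determinant of the pair `(w, u)`. -/
noncomputable def Jac (w u : ℝ × ℝ → ℝ) (x : ℝ × ℝ) : ℝ :=
  fderiv ℝ w x (1, 0) * fderiv ℝ u x (0, 1) - fderiv ℝ w x (0, 1) * fderiv ℝ u x (1, 0)

theorem Jac_continuous {w u : ℝ × ℝ → ℝ} (hw : ContDiff ℝ 1 w) (hu : ContDiff ℝ 2 u) :
    Continuous (Jac w u) := by
  have h1 : Continuous (fderiv ℝ w) := hw.continuous_fderiv (by norm_num)
  have h2 : Continuous (fderiv ℝ u) := hu.continuous_fderiv (by norm_num)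
  unfold Jac
  fun_prop

theorem clm_apply_pair (A : ℝ × ℝ →L[ℝ] ℝ) (p : ℝ × ℝ) :
    A p = p.1 * A (1, 0) + p.2 * A (0, 1) := by
  have : p = p.1 • ((1, 0) : ℝ × ℝ) + p.2 • ((0, 1) : ℝ × ℝ) := by
    ext <;> simp
  conv_lhs => rw [this]
  rw [map_add, map_smul, map_smul]; simp

theorem clm_det_pair (A : ℝ × ℝ →L[ℝ] ℝ × ℝ) :
    A.det = (A (1, 0)).1 * (A (0, 1)).2 - (A (1, 0)).2 * (A (0, 1)).1 := by
  rw [ContinuousLinearMap.det, ← LinearMap.det_toMatrix (Module.Basis.finTwoProd ℝ),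
    Matrix.det_fin_two]
  simp [LinearMap.toMatrix_apply]
  ring

theorem Jac_comp {w u : ℝ × ℝ → ℝ} {Φ : ℝ × ℝ → ℝ × ℝ} {z : ℝ × ℝ}
    (hw : DifferentiableAt ℝ w (Φ z)) (hu : DifferentiableAt ℝ u (Φ z))
    (hΦ : DifferentiableAt ℝ Φ z) :
    Jac (w ∘ Φ) (u ∘ Φ) z = (fderiv ℝ Φ z).det * Jac w u (Φ z) := by
  rw [clm_det_pair]
  unfold Jac
  rw [fderiv_comp z hw hΦ, fderiv_comp z hu hΦ]
  simp only [ContinuousLinearMap.comp_apply]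
  rw [clm_apply_pair (fderiv ℝ w (Φ z)) (fderiv ℝ Φ z (1, 0)),
    clm_apply_pair (fderiv ℝ w (Φ z)) (fderiv ℝ Φ z (0, 1)),
    clm_apply_pair (fderiv ℝ u (Φ z)) (fderiv ℝ Φ z (1, 0)),
    clm_apply_pair (fderiv ℝ u (Φ z)) (fderiv ℝ Φ z (0, 1))]
  ring

theorem rect_green {w u : ℝ × ℝ → ℝ} (hw : ContDiff ℝ 1 w) (hu : ContDiff ℝ 2 u)
    {a b : ℝ × ℝ} (hab : a ≤ b) (hl : ∀ y ∈ Set.Icc a.2 b.2, w (a.1, y) = 0)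
    (hr : ∀ y ∈ Set.Icc a.2 b.2, w (b.1, y) = 0)
    (hb : ∀ x ∈ Set.Icc a.1 b.1, w (x, a.2) = 0) :
    ∫ z in Set.Icc a b, Jac w u z =
      - ∫ x in a.1..b.1, w (x, b.2) * fderiv ℝ u (x, b.2) (1, 0) := by
  have hD : ContDiff ℝ 1 (fderiv ℝ u) := hu.fderiv_right (by norm_num)
  have h1 : ∀ v, ContDiff ℝ 1 (fun z => fderiv ℝ u z v) := fun v => hD.clm_apply contDiff_const
  have hwd : Differentiable ℝ w := hw.differentiable (by norm_num)
  have hfd : ∀ v, Differentiable ℝ (fun z => fderiv ℝ u z v) :=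
    fun v => (h1 v).differentiable (by norm_num)
  set f : ℝ × ℝ → ℝ := fun z => w z * fderiv ℝ u z (0, 1)
  set g : ℝ × ℝ → ℝ := fun z => - (w z * fderiv ℝ u z (1, 0))
  have hf : ContDiff ℝ 1 f := hw.mul (h1 _)
  have hg : ContDiff ℝ 1 g := (hw.mul (h1 _)).neg
  have key : ∀ z, fderiv ℝ f z (1, 0) + fderiv ℝ g z (0, 1) = Jac w u z := by
    intro z
    have hDz : DifferentiableAt ℝ (fderiv ℝ u) z := hD.differentiable (by norm_num) z
    have e : ∀ v, HasFDerivAt (fun z => fderiv ℝ u z v) ((fderiv ℝ (fderiv ℝ u) z).flip v) z := by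
      intro v
      have := hDz.hasFDerivAt.clm_apply (hasFDerivAt_const v z)
      simpa using this
    have e1 := (hwd z).hasFDerivAt.mul (e (0, 1))
    have e2 := ((hwd z).hasFDerivAt.mul (e (1, 0))).neg
    have hs : fderiv ℝ (fderiv ℝ u) z (1, 0) (0, 1) = fderiv ℝ (fderiv ℝ u) z (0, 1) (1, 0) :=
      (hu.contDiffAt (x := z)).isSymmSndFDerivAt (by simp) _ _
    rw [show fderiv ℝ f z = _ from e1.fderiv, show fderiv ℝ g z = _ from e2.fderiv]
    simp [Jac, hs]
    ring
  have := integral_divergence_prod_Icc_of_hasFDerivAt_of_le f g (fderiv ℝ f) (fderiv ℝ g) a b hab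
    hf.continuous.continuousOn hg.continuous.continuousOn
    (fun x _ => (hf.differentiable (by norm_num) x).hasFDerivAt)
    (fun x _ => (hg.differentiable (by norm_num) x).hasFDerivAt)
    (by
      simp only [key]
      exact (Jac_continuous hw hu).continuousOn.integrableOn_compact isCompact_Icc)
  simp only [key] at this
  rw [this]
  have i1 : ∫ x in a.1..b.1, g (x, a.2) = 0 := by
    apply intervalIntegral.integral_zero_ae
    refine Filter.Eventually.of_forall fun x hx => ?_
    rw [Set.uIoc_of_le hab.1] at hx
    simp [g, hb x ⟨hx.1.le, hx.2⟩]
  have i2 : ∫ y in a.2..b.2, f (b.1, y) = 0 := by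
    apply intervalIntegral.integral_zero_ae
    refine Filter.Eventually.of_forall fun x hx => ?_
    rw [Set.uIoc_of_le hab.2] at hx
    simp [f, hr x ⟨hx.1.le, hx.2⟩]
  have i3 : ∫ y in a.2..b.2, f (a.1, y) = 0 := by
    apply intervalIntegral.integral_zero_ae
    refine Filter.Eventually.of_forall fun x hx => ?_
    rw [Set.uIoc_of_le hab.2] at hx
    simp [f, hl x ⟨hx.1.le, hx.2⟩]
  rw [i1, i2, i3]
  simp [g]

theorem Jac_eq_zero {w u : ℝ × ℝ → ℝ} {x : ℝ × ℝ} (hx : x ∉ tsupport w) : Jac w u x = 0 := by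
  have h : fderiv ℝ w x = 0 := by
    by_contra h
    exact hx (support_fderiv_subset ℝ h)
  simp [Jac, h]

/-- Interior case. -/
theorem green_interior {Ω : Set (ℝ × ℝ)} (hbdd : Bornology.IsBounded Ω)
    {w u : ℝ × ℝ → ℝ} (hw : ContDiff ℝ 1 w) (hu : ContDiff ℝ 2 u) (hs : tsupport w ⊆ Ω) :
    ∫ x in Ω, Jac w u x = 0 := by
  obtain ⟨R, hR⟩ := hbdd.subset_ball (0 : ℝ × ℝ)
  have hRp : ∀ z ∈ Ω, |z.1| < R ∧ |z.2| < R := by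
    intro z hz
    have := hR hz
    rw [mem_ball_zero_iff, Prod.norm_def, max_lt_iff] at this
    exact this
  have hw0 : ∀ z, z ∉ Ω → w z = 0 := fun z hz => image_eq_zero_of_notMem_tsupport (fun h => hz (hs h))
  set M := max R 0
  have hM : ∀ z ∈ Ω, |z.1| < M ∧ |z.2| < M := fun z hz =>
    ⟨(hRp z hz).1.trans_le (le_max_left _ _), (hRp z hz).2.trans_le (le_max_left _ _)⟩
  have hM0 : 0 ≤ M := le_max_right _ _
  have h := rect_green hw hu (a := (-M, -M)) (b := (M, M)) (by constructor <;> simp <;> linarith)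
    (fun y _ => hw0 _ fun h => by have := (hM _ h).1; simp at this; linarith [le_abs_self M])
    (fun y _ => hw0 _ fun h => by have := (hM _ h).1; simp at this; linarith [le_abs_self M])
    (fun y _ => hw0 _ fun h => by have := (hM _ h).2; simp at this; linarith [le_abs_self M])
  have h2 : ∀ x, w (x, M) = 0 := 
    fun y => hw0 _ fun h => by have := (hM _ h).2; simp at this; linarith [le_abs_self M]
  have h3 : ∫ x in Ω, Jac w u x = ∫ x, Jac w u x :=
    setIntegral_eq_integral_of_forall_compl_eq_zero fun x hx => Jac_eq_zero fun h => hx (hs h)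
  have h4 : ∫ x in Set.Icc (-M, -M) (M, M), Jac w u x = ∫ x, Jac w u x :=
    setIntegral_eq_integral_of_forall_compl_eq_zero fun x hx => Jac_eq_zero fun h => hx (by
      have := hM x (hs h)
      have h1 := abs_lt.1 this.1
      have h2 := abs_lt.1 this.2
      exact ⟨⟨h1.1.le, h2.1.le⟩, ⟨h1.2.le, h2.2.le⟩⟩)
  rw [h3, ← h4, h]
  simp [h2]

theorem curve_inj {L : ℝ} (hL : 0 < L) {σ : ℝ → ℝ × ℝ}
    (hσper : ∀ t, σ (t + L) = σ t) (hσinj : Set.InjOn σ (Set.Ico 0 L)) {s t : ℝ}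
    (h : σ s = σ t) (h1 : |s - t| < L) : s = t := by
  have hp : Function.Periodic σ L := hσper
  have e1 : σ (toIcoMod hL 0 s) = σ s := by
    rw [toIcoMod]; exact hp.sub_zsmul_eq _
  have e2 : σ (toIcoMod hL 0 t) = σ t := by
    rw [toIcoMod]; exact hp.sub_zsmul_eq _
  have m1 := toIcoMod_mem_Ico hL 0 s
  have m2 := toIcoMod_mem_Ico hL 0 t
  rw [zero_add] at m1 m2
  have := hσinj m1 m2 (by rw [e1, e2, h])
  have d1 := toIcoMod_add_toIcoDiv_zsmul hL 0 s
  have d2 := toIcoMod_add_toIcoDiv_zsmul hL 0 t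
  have hst : s - t = ((toIcoDiv hL 0 s - toIcoDiv hL 0 t : ℤ) : ℝ) * L := by
    simp only [zsmul_eq_mul] at d1 d2
    push_cast
    linarith
  rw [hst, abs_mul, abs_of_pos hL, ← Int.cast_abs] at h1
  have h2 : ((|toIcoDiv hL 0 s - toIcoDiv hL 0 t| : ℤ) : ℝ) < 1 := by
    by_contra hc
    push Not at hc
    nlinarith
  have h3 : |toIcoDiv hL 0 s - toIcoDiv hL 0 t| < 1 := by exact_mod_cast h2
  rw [Int.abs_lt_one_iff] at h3
  rw [h3] at hst
  simp only [Int.cast_zero, zero_mul] at hst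
  linarith

/-- Reduction of a parameter to a given period window. -/
theorem curve_window {L : ℝ} (hL : 0 < L) {σ : ℝ → ℝ × ℝ}
    (hσper : ∀ t, σ (t + L) = σ t) (a t : ℝ) : ∃ s ∈ Set.Ico a (a + L), σ s = σ t := by
  have hp : Function.Periodic σ L := hσper
  refine ⟨toIcoMod hL a t, toIcoMod_mem_Ico hL a t, ?_⟩
  rw [toIcoMod]; exact hp.sub_zsmul_eq _

/-- Boundary chart. -/
noncomputable def Chart (σ : ℝ → ℝ × ℝ) (t₀ : ℝ) (z : ℝ × ℝ) : ℝ × ℝ :=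
  σ z.1 + z.2 • ((deriv σ t₀).2, -(deriv σ t₀).1)

theorem Chart_contDiff {σ : ℝ → ℝ × ℝ} (hσ : ContDiff ℝ (⊤ : ℕ∞) σ) (t₀ : ℝ) :
    ContDiff ℝ 2 (Chart σ t₀) := by
  have : ContDiff ℝ 2 σ := contDiff_infty.1 hσ 2
  unfold Chart
  fun_prop

theorem Chart_det {σ : ℝ → ℝ × ℝ} (hσ : ContDiff ℝ (⊤ : ℕ∞) σ) (t₀ : ℝ) (z : ℝ × ℝ) :
    (fderiv ℝ (Chart σ t₀) z).det =
      -((deriv σ z.1).1 * (deriv σ t₀).1 + (deriv σ z.1).2 * (deriv σ t₀).2) := by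
  have hd : HasDerivAt σ (deriv σ z.1) z.1 :=
    (hσ.differentiable (by simp) z.1).hasDerivAt
  have h1 : HasFDerivAt (Chart σ t₀) _ z :=
    (hd.hasFDerivAt.comp z (hasFDerivAt_fst (p := z))).add
      ((hasFDerivAt_snd (𝕜 := ℝ) (p := z)).smul_const ((deriv σ t₀).2, -(deriv σ t₀).1))
  rw [h1.fderiv, clm_det_pair]
  simp
  ring

def Box (t₀ c : ℝ) : Set (ℝ × ℝ) := Set.Ioo (t₀ - c) (t₀ + c) ×ˢ Set.Ioo (-c) c

theorem Box_mono (t₀ : ℝ) {c d : ℝ} (h : c ≤ d) : Box t₀ c ⊆ Box t₀ d := by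
  rintro ⟨x, y⟩ ⟨⟨h1, h2⟩, ⟨h3, h4⟩⟩
  simp only at h1 h2 h3 h4
  exact ⟨⟨by simp only; linarith, by simp only; linarith⟩,
    ⟨by simp only; linarith, by simp only; linarith⟩⟩

theorem Box_isOpen (t₀ c : ℝ) : IsOpen (Box t₀ c) := isOpen_Ioo.prod isOpen_Ioo

theorem exists_Box_subset {t₀ : ℝ} {S : Set (ℝ × ℝ)} (hS : S ∈ nhds (t₀, (0 : ℝ))) :
    ∃ c > 0, Box t₀ c ⊆ S := by
  obtain ⟨c, hc, h⟩ := Metric.mem_nhds_iff.1 hS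
  refine ⟨c, hc, fun z hz => h ?_⟩
  rw [← ball_prod_same, Real.ball_eq_Ioo, Real.ball_eq_Ioo]
  simpa [Box] using hz

theorem local_chart (Ω : Set (ℝ × ℝ)) (hΩ : IsOpen Ω)
    (L : ℝ) (hL : 0 < L) (σ : ℝ → ℝ × ℝ) (hσ : ContDiff ℝ (⊤ : ℕ∞) σ)
    (hσper : ∀ t, σ (t + L) = σ t) (hσinj : Set.InjOn σ (Set.Ico 0 L))
    (hσspeed : ∀ t, (deriv σ t).1 ^ 2 + (deriv σ t).2 ^ 2 = 1)
    (hσrange : frontier Ω = Set.range σ)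
    (hσouter : ∀ t : ℝ, ∃ ε > 0, ∀ h ∈ Set.Ioo (0 : ℝ) ε,
      σ t + h • ((deriv σ t).2, -(deriv σ t).1) ∉ closure Ω) (t₀ : ℝ) :
    ∃ c > 0, 2 * c < L ∧ Set.InjOn (Chart σ t₀) (Box t₀ c) ∧
      (∀ d ≤ c, IsOpen (Chart σ t₀ '' Box t₀ d)) ∧
      (∀ z ∈ Box t₀ c, (fderiv ℝ (Chart σ t₀) z).det < 0) ∧
      (∀ z ∈ Box t₀ c, ∀ t, σ t = Chart σ t₀ z → z.2 = 0) ∧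
      (∀ z ∈ Box t₀ c, Chart σ t₀ z ∈ Ω ↔ z.2 < 0) := by
  set Φ := Chart σ t₀ with hΦdef
  have hΦ : ContDiff ℝ 2 Φ := Chart_contDiff hσ t₀
  have hΦ0 : ∀ t, Φ (t, 0) = σ t := by intro t; simp [hΦdef, Chart]
  have hdet0 : (fderiv ℝ Φ (t₀, 0)).det = -1 := by
    rw [Chart_det hσ]
    have := hσspeed t₀
    simp only
    linarith
  have hdetc : Continuous fun z => (fderiv ℝ Φ z).det := by
    have hc : Continuous (deriv σ) := hσ.continuous_deriv (by exact_mod_cast le_top)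
    simp only [hΦdef, Chart_det hσ]
    fun_prop
  -- the inverse function theorem
  have hstrict : HasStrictFDerivAt Φ
      ((fderiv ℝ Φ (t₀, 0)).toContinuousLinearEquivOfDetNeZero (by rw [hdet0]; norm_num) :
        ℝ × ℝ →L[ℝ] ℝ × ℝ) (t₀, 0) := by
    rw [ContinuousLinearMap.coe_toContinuousLinearEquivOfDetNeZero]
    exact hΦ.contDiffAt.hasStrictFDerivAt (by norm_num)
  set e := hstrict.toOpenPartialHomeomorph Φ
  have he : ⇑e = Φ := hstrict.toOpenPartialHomeomorph_coe
  have hsrc : e.source ∈ nhds (t₀, (0 : ℝ)) :=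
    e.open_source.mem_nhds hstrict.mem_toOpenPartialHomeomorph_source
  obtain ⟨a₁, ha₁, hB1⟩ := exists_Box_subset hsrc
  set a := min a₁ (L / 4)
  have ha : 0 < a := lt_min ha₁ (by linarith)
  have haL : a ≤ L / 4 := min_le_right _ _
  have hBa : Box t₀ a ⊆ e.source := (Box_mono t₀ (min_le_left _ _)).trans hB1
  -- remote part of the curve
  set K := σ '' Set.Icc (t₀ + a) (t₀ + L - a)
  have hK : IsCompact K := isCompact_Icc.image hσ.continuous
  have hK0 : Φ (t₀, 0) ∉ K := by
    rintro ⟨t, ht, h⟩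
    rw [hΦ0] at h
    have := curve_inj hL hσper hσinj h (by rw [abs_lt]; constructor <;> linarith [ht.1, ht.2])
    linarith [ht.1]
  have hN : {z | (fderiv ℝ Φ z).det < 0} ∩ Φ ⁻¹' Kᶜ ∈ nhds (t₀, (0 : ℝ)) := by
    refine IsOpen.mem_nhds ?_ ⟨by simp only [Set.mem_ofPred_eq]; rw [hdet0]; norm_num, hK0⟩
    exact (isOpen_lt hdetc continuous_const).inter (hK.isClosed.isOpen_compl.preimage hΦ.continuous)
  obtain ⟨c₁, hc₁, hB2⟩ := exists_Box_subset hN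
  set c := min c₁ a
  have hc : 0 < c := lt_min hc₁ ha
  have hca : c ≤ a := min_le_right _ _
  have hBc : Box t₀ c ⊆ e.source := (Box_mono t₀ hca).trans hBa
  have hBN := (Box_mono t₀ (min_le_left c₁ a)).trans hB2
  have hinj : Set.InjOn Φ (Box t₀ c) := by
    rw [← he]; exact e.injOn.mono hBc
  have hopen : ∀ d ≤ c, IsOpen (Φ '' Box t₀ d) := by
    intro d hd
    rw [← he]
    exact e.isOpen_image_of_subset_source (Box_isOpen _ _) ((Box_mono t₀ hd).trans hBc)
  have hcurve : ∀ z ∈ Box t₀ c, ∀ t, σ t = Φ z → z.2 = 0 := by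
    intro z hz t ht
    obtain ⟨s, hs, hst⟩ := curve_window hL hσper (t₀ - a) t
    have hsz : σ s = Φ z := hst.trans ht
    have hsK : σ s ∉ K := by rw [hsz]; exact (hBN hz).2
    have hs2 : s < t₀ + a := by
      by_contra hcon
      push Not at hcon
      exact hsK ⟨s, ⟨hcon, by linarith [hs.2]⟩, rfl⟩
    have hs0 : s ≠ t₀ - a := by
      intro h0
      refine hsK ⟨s + L, ⟨by linarith, by linarith⟩, hσper s⟩
    have hsm : (s, (0 : ℝ)) ∈ Box t₀ a :=
      ⟨⟨lt_of_le_of_ne hs.1 (Ne.symm hs0), hs2⟩, ⟨by simp only; linarith, by simp only; linarith⟩⟩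
    have : (s, (0 : ℝ)) = z := by
      apply e.injOn (hBa hsm) (hBc hz)
      rw [he, hΦ0, hsz]
    rw [← this]
  refine ⟨c, hc, by linarith, hinj, hopen, fun z hz => (hBN hz).1, hcurve, ?_⟩
  -- sides
  have side : ∀ A : Set ℝ, Convex ℝ A → (0 : ℝ) ∉ A → A ⊆ Set.Ioo (-c) c →
      Φ '' (Set.Ioo (t₀ - c) (t₀ + c) ×ˢ A) ⊆ Ω ∨
        Φ '' (Set.Ioo (t₀ - c) (t₀ + c) ×ˢ A) ⊆ (closure Ω)ᶜ := by
    intro A hA h0 hAc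
    have hpre : IsPreconnected (Φ '' (Set.Ioo (t₀ - c) (t₀ + c) ×ˢ A)) :=
      (((convex_Ioo _ _).prod hA).isPreconnected).image _ hΦ.continuous.continuousOn
    have hcov : Φ '' (Set.Ioo (t₀ - c) (t₀ + c) ×ˢ A) ⊆ Ω ∪ (closure Ω)ᶜ := by
      rintro _ ⟨z, hz, rfl⟩
      by_contra hcon
      rw [Set.mem_union, not_or, Set.notMem_compl_iff] at hcon
      have hf : Φ z ∈ frontier Ω := by
        rw [hΩ.frontier_eq]; exact ⟨hcon.2, hcon.1⟩
      rw [hσrange] at hf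
      obtain ⟨t, ht⟩ := hf
      have := hcurve z ⟨hz.1, hAc hz.2⟩ t ht
      exact h0 (this ▸ hz.2)
    have hdis : Disjoint Ω (closure Ω)ᶜ :=
      Set.disjoint_compl_right_iff_subset.2 subset_closure
    by_cases hne : (Φ '' (Set.Ioo (t₀ - c) (t₀ + c) ×ˢ A) ∩ Ω).Nonempty
    · exact Or.inl (hpre.subset_left_of_subset_union hΩ isClosed_closure.isOpen_compl hdis hcov hne)
    · right
      intro x hx
      rcases hcov hx with h | h
      · exact absurd ⟨x, hx, h⟩ hne
      · exact h
  have hup : Φ '' (Set.Ioo (t₀ - c) (t₀ + c) ×ˢ Set.Ioo 0 c) ⊆ (closure Ω)ᶜ := by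
    rcases side (Set.Ioo 0 c) (convex_Ioo _ _) (by simp)
      (Set.Ioo_subset_Ioo (by linarith) le_rfl) with h | h
    · exfalso
      obtain ⟨ε, hε, hout⟩ := hσouter t₀
      set η := min ε c / 2
      have hm : 0 < min ε c := lt_min hε hc
      have h1 : η < ε := by have := min_le_left ε c; simp only [η]; linarith
      have h2 : η < c := by have := min_le_right ε c; simp only [η]; linarith
      have h3 : 0 < η := half_pos hm
      refine hout η ⟨h3, h1⟩ (subset_closure (h ⟨(t₀, η), ⟨⟨by simp only; linarith,
        by simp only; linarith⟩, ⟨h3, h2⟩⟩, rfl⟩))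
    · exact h
  have hmid : ∀ t, Φ (t, 0) ∉ Ω := by
    intro t ht
    have hf : Φ (t, 0) ∈ frontier Ω := by rw [hσrange, hΦ0]; exact ⟨t, rfl⟩
    rw [hΩ.frontier_eq] at hf
    exact hf.2 ht
  have hnot : ∀ z ∈ Box t₀ c, ¬ z.2 < 0 → Φ z ∉ Ω := by
    rintro ⟨t, s⟩ hz hs
    simp only [not_lt] at hs
    rcases hs.eq_or_lt with h | h
    · rw [← h]; exact hmid t
    · intro hmem
      exact hup ⟨(t, s), ⟨hz.1, ⟨h, hz.2.2⟩⟩, rfl⟩ (subset_closure hmem)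
  have hdown : Φ '' (Set.Ioo (t₀ - c) (t₀ + c) ×ˢ Set.Ioo (-c) 0) ⊆ Ω := by
    rcases side (Set.Ioo (-c) 0) (convex_Ioo _ _) (by simp)
      (Set.Ioo_subset_Ioo le_rfl (by linarith)) with h | h
    · exact h
    · exfalso
      have hf : σ t₀ ∈ closure Ω := frontier_subset_closure (hσrange ▸ ⟨t₀, rfl⟩)
      have hmem : σ t₀ ∈ Φ '' Box t₀ c :=
        ⟨(t₀, 0), ⟨⟨by simp only; linarith, by simp only; linarith⟩,
          ⟨by simp only; linarith, hc⟩⟩, hΦ0 t₀⟩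
      obtain ⟨x, ⟨z, hz, rfl⟩, hx⟩ := mem_closure_iff.1 hf _ (hopen c le_rfl) hmem
      by_cases hz2 : z.2 < 0
      · exact h ⟨z, ⟨hz.1, ⟨hz.2.1, hz2⟩⟩, rfl⟩ (subset_closure hx)
      · exact hnot z hz hz2 hx
  intro z hz
  constructor
  · intro h
    by_contra hcon
    exact hnot z hz hcon h
  · intro h
    exact hdown ⟨z, ⟨hz.1, ⟨hz.2.1, h⟩⟩, rfl⟩

/-- Boundary case, in a chart. -/
theorem green_boundary (Ω : Set (ℝ × ℝ)) (hΩ : IsOpen Ω)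
    (L : ℝ) (hL : 0 < L) (σ : ℝ → ℝ × ℝ) (hσ : ContDiff ℝ (⊤ : ℕ∞) σ)
    (hσper : ∀ t, σ (t + L) = σ t) (hσinj : Set.InjOn σ (Set.Ico 0 L))
    (t₀ c : ℝ) (hc : 0 < c) (hcL : 2 * c < L) (hinj : Set.InjOn (Chart σ t₀) (Box t₀ c))
    (hdet : ∀ z ∈ Box t₀ c, (fderiv ℝ (Chart σ t₀) z).det < 0)
    (hcurve : ∀ z ∈ Box t₀ c, ∀ t, σ t = Chart σ t₀ z → z.2 = 0)
    (hside : ∀ z ∈ Box t₀ c, Chart σ t₀ z ∈ Ω ↔ z.2 < 0)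
    {w u : ℝ × ℝ → ℝ} (hw : ContDiff ℝ 1 w) (hu : ContDiff ℝ 2 u)
    (hs : tsupport w ⊆ Chart σ t₀ '' Box t₀ (c / 2)) :
    ∫ x in Ω, Jac w u x = ∫ t in (0 : ℝ)..L, w (σ t) * deriv (fun s => u (σ s)) t := by
  set Φ := Chart σ t₀ with hΦdef
  have hΦ : ContDiff ℝ 2 Φ := Chart_contDiff hσ t₀
  have hΦ0 : ∀ t, Φ (t, 0) = σ t := by intro t; simp [hΦdef, Chart]
  set d := c / 2 with hd
  have hd0 : 0 < d := half_pos hc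
  have hdc : d < c := half_lt_self hc
  have hsub : Box t₀ d ⊆ Box t₀ c := Box_mono t₀ hdc.le
  set Q : Set (ℝ × ℝ) := Set.Ioo (t₀ - d) (t₀ + d) ×ˢ Set.Ioo (-d) 0 with hQ
  have hQd : Q ⊆ Box t₀ d := fun z hz => ⟨hz.1, hz.2.1, hz.2.2.trans hd0⟩
  have hQc : Q ⊆ Box t₀ c := hQd.trans hsub
  have hΩQ : Φ '' Q ⊆ Ω := by
    rintro _ ⟨z, hz, rfl⟩
    exact (hside z (hQc hz)).2 hz.2.2
  have hw0 : ∀ z ∈ Box t₀ c, z ∉ Box t₀ d → w (Φ z) = 0 := by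
    intro z hz hzd
    apply image_eq_zero_of_notMem_tsupport
    intro h
    obtain ⟨z', hz', he⟩ := hs h
    exact hzd (hinj (hsub hz') hz he ▸ hz')
  have e1 : ∫ x in Ω, Jac w u x = ∫ x in Φ '' Q, Jac w u x := by
    apply setIntegral_eq_of_subset_of_forall_sdiff_eq_zero hΩ.measurableSet hΩQ
    intro x hx
    apply Jac_eq_zero
    intro h
    obtain ⟨z, hz, rfl⟩ := hs h
    exact hx.2 ⟨z, ⟨hz.1, hz.2.1, (hside z (hsub hz)).1 hx.1⟩, rfl⟩
  have hQm : MeasurableSet Q := measurableSet_Ioo.prod measurableSet_Ioo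
  have hwΦ : ContDiff ℝ 1 (w ∘ Φ) := hw.comp (hΦ.of_le (by norm_num))
  have huΦ : ContDiff ℝ 2 (u ∘ Φ) := hu.comp hΦ
  have e2 : ∫ x in Φ '' Q, Jac w u x = ∫ z in Q, - Jac (w ∘ Φ) (u ∘ Φ) z := by
    rw [integral_image_eq_integral_abs_det_fderiv_smul volume hQm
      (fun x _ => (hΦ.differentiable (by norm_num) x).hasFDerivAt.hasFDerivWithinAt)
      (hinj.mono hQc)]
    refine setIntegral_congr_fun hQm fun z hz => ?_
    rw [Jac_comp (hw.differentiable (by norm_num) _) (hu.differentiable (by norm_num) _)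
      (hΦ.differentiable (by norm_num) _), abs_of_neg (hdet z (hQc hz)), smul_eq_mul]
    ring
  have e3 : ∫ z in Q, Jac (w ∘ Φ) (u ∘ Φ) z =
      ∫ z in Set.Icc (t₀ - d, -d) (t₀ + d, 0), Jac (w ∘ Φ) (u ∘ Φ) z := by
    apply setIntegral_congr_set
    rw [← Set.Icc_prod_Icc, hQ]
    exact Measure.set_prod_ae_eq Ioo_ae_eq_Icc Ioo_ae_eq_Icc
  have e4 := rect_green hwΦ huΦ (a := (t₀ - d, -d)) (b := (t₀ + d, 0))
    (by constructor <;> simp only <;> linarith)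
    (fun y hy => hw0 _ ⟨⟨by simp only; linarith, by simp only; linarith⟩, ⟨by simp only at *; linarith [hy.1], by simp only at *; linarith [hy.2]⟩⟩
      (fun h => by have := h.1.1; simp only at this; linarith))
    (fun y hy => hw0 _ ⟨⟨by simp only; linarith, by simp only; linarith⟩, ⟨by simp only at *; linarith [hy.1], by simp only at *; linarith [hy.2]⟩⟩
      (fun h => by have := h.1.2; simp only at this; linarith))
    (fun x hx => hw0 _ ⟨⟨by simp only at *; linarith [hx.1], by simp only at *; linarith [hx.2]⟩, ⟨by simp only; linarith, by simp only; linarith⟩⟩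
      (fun h => by have := h.2.1; simp only at this; linarith))
  simp only at e4
  -- right side
  set F : ℝ → ℝ := fun t => w (σ t) * deriv (fun s => u (σ s)) t with hF
  have hFper : Function.Periodic F L := by
    intro t
    have : deriv (fun s => u (σ s)) (t + L) = deriv (fun s => u (σ s)) t := by
      rw [← deriv_comp_add_const]
      simp only [hσper]
    simp only [hF, this, hσper]
  have hσ2 : ContDiff ℝ 2 σ := contDiff_infty.1 hσ 2
  have huσ : ContDiff ℝ 2 (fun s => u (σ s)) := hu.comp hσ2
  have hFc : Continuous F :=
    (hw.continuous.comp hσ.continuous).mul (huσ.continuous_deriv (by norm_num))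
  have r1 : ∫ t in (0 : ℝ)..L, F t = ∫ t in (t₀ - d)..(t₀ - d + L), F t := by
    have := hFper.intervalIntegral_add_eq 0 (t₀ - d)
    rwa [zero_add] at this
  have r2 : ∫ t in (t₀ + d)..(t₀ - d + L), F t = 0 := by
    apply intervalIntegral.integral_zero_ae
    refine Filter.Eventually.of_forall fun t ht => ?_
    rw [Set.uIoc_of_le (by linarith)] at ht
    have : w (σ t) = 0 := by
      apply image_eq_zero_of_notMem_tsupport
      intro h
      obtain ⟨z, hz, he⟩ := hs h
      have hz2 := hcurve z (hsub hz) t he.symm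
      have : z = (z.1, 0) := by rw [← hz2]
      rw [this, hΦ0] at he
      have h1 := hz.1.1
      have h2 := hz.1.2
      have := curve_inj hL hσper hσinj he (by rw [abs_lt]; constructor <;> linarith [ht.1, ht.2])
      linarith [ht.1]
    simp [hF, this]
  have r3 : ∫ t in (0 : ℝ)..L, F t = ∫ t in (t₀ - d)..(t₀ + d), F t := by
    rw [r1, ← intervalIntegral.integral_add_adjacent_intervals (b := t₀ + d)
      (hFc.intervalIntegrable _ _) (hFc.intervalIntegrable _ _), r2, add_zero]
  rw [r3, e1, e2, integral_neg, e3, e4, neg_neg]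
  refine intervalIntegral.integral_congr fun t _ => ?_
  simp only [hF, Function.comp_apply, hΦ0]
  congr 1
  have hd1 : HasFDerivAt (u ∘ Φ) (fderiv ℝ (u ∘ Φ) (t, 0)) (t, 0) :=
    (huΦ.differentiable (by norm_num) _).hasFDerivAt
  have hd2 : HasDerivAt (fun s : ℝ => (s, (0 : ℝ))) (1, 0) t :=
    (hasDerivAt_id t).prodMk (hasDerivAt_const t 0)
  have := hd1.comp_hasDerivAt t hd2
  rw [← this.deriv]
  congr 1
  ext s
  simp [hΦ0]

theorem green (Ω : Set (ℝ × ℝ)) (hΩ : IsOpen Ω) (hbdd : Bornology.IsBounded Ω)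
    (L : ℝ) (hL : 0 < L) (σ : ℝ → ℝ × ℝ) (hσ : ContDiff ℝ (⊤ : ℕ∞) σ)
    (hσper : ∀ t, σ (t + L) = σ t) (hσinj : Set.InjOn σ (Set.Ico 0 L))
    (hσspeed : ∀ t, (deriv σ t).1 ^ 2 + (deriv σ t).2 ^ 2 = 1)
    (hσrange : frontier Ω = Set.range σ)
    (hσouter : ∀ t : ℝ, ∃ ε > 0, ∀ h ∈ Set.Ioo (0 : ℝ) ε,
      σ t + h • ((deriv σ t).2, -(deriv σ t).1) ∉ closure Ω)
    {w u : ℝ × ℝ → ℝ} (hw : ContDiff ℝ 1 w) (hu : ContDiff ℝ 2 u) :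
    ∫ x in Ω, Jac w u x = ∫ t in (0 : ℝ)..L, w (σ t) * deriv (fun s => u (σ s)) t := by
  have hcl : closure Ω = Ω ∪ Set.range σ := by rw [← hσrange, closure_eq_self_union_frontier]
  have hσΩ : ∀ t, σ t ∉ Ω := by
    intro t ht
    have hf : σ t ∈ frontier Ω := by rw [hσrange]; exact ⟨t, rfl⟩
    rw [hΩ.frontier_eq] at hf
    exact hf.2 ht
  -- local statement
  have hloc : ∀ p ∈ closure Ω, ∃ U ∈ nhds p, ∀ w : ℝ × ℝ → ℝ, ContDiff ℝ 1 w → tsupport w ⊆ U →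
      ∫ x in Ω, Jac w u x = ∫ t in (0 : ℝ)..L, w (σ t) * deriv (fun s => u (σ s)) t := by
    intro p hp
    rw [hcl] at hp
    rcases hp with hp | ⟨t₀, rfl⟩
    · refine ⟨Ω, hΩ.mem_nhds hp, fun w hw hs => ?_⟩
      rw [green_interior hbdd hw hu hs]
      have : ∀ t, w (σ t) = 0 := fun t =>
        image_eq_zero_of_notMem_tsupport fun h => hσΩ t (hs h)
      simp [this]
    · obtain ⟨c, hc, hcL, hinj, hopen, hdet, hcurve, hside⟩ :=
        local_chart Ω hΩ L hL σ hσ hσper hσinj hσspeed hσrange hσouter t₀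
      refine ⟨Chart σ t₀ '' Box t₀ (c / 2), (hopen _ (by linarith)).mem_nhds ?_, fun w hw hs =>
        green_boundary Ω hΩ L hL σ hσ hσper hσinj t₀ c hc hcL hinj hdet hcurve hside hw hu hs⟩
      exact ⟨(t₀, 0), ⟨⟨by simp only; linarith, by simp only; linarith⟩,
          ⟨by simp only; linarith, by simp only; linarith⟩⟩, by simp [Chart]⟩
  -- bump functions
  have hbump : ∀ p ∈ closure Ω, ∃ f : ℝ × ℝ → ℝ, ContDiff ℝ 1 f ∧ (∀ᶠ x in nhds p, f x = 1) ∧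
      ∀ w : ℝ × ℝ → ℝ, ContDiff ℝ 1 w → 
      ∫ x in Ω, Jac (fun x => f x * w x) u x =
        ∫ t in (0 : ℝ)..L, (f (σ t) * w (σ t)) * deriv (fun s => u (σ s)) t := by
    intro p hp
    obtain ⟨U, hU, h⟩ := hloc p hp
    obtain ⟨r, hr, hrU⟩ := Metric.nhds_basis_closedBall.mem_iff.1 hU
    let f : ContDiffBump p := ⟨r / 2, r, half_pos hr, half_lt_self hr⟩
    refine ⟨f, f.contDiff, f.eventuallyEq_one, fun w hw => ?_⟩
    refine h _ (f.contDiff.mul hw) ?_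
    refine (tsupport_mul_subset_left (f := f) (g := w)).trans ?_
    rw [f.tsupport_eq]
    exact hrU
  have hcomp : IsCompact (closure Ω) := hbdd.isCompact_closure
  have areaInt : ∀ w : ℝ × ℝ → ℝ, ContDiff ℝ 1 w → IntegrableOn (Jac w u) Ω := fun w hw =>
    ((Jac_continuous hw hu).continuousOn.integrableOn_compact hcomp).mono_set subset_closure
  have hσ2 : ContDiff ℝ 2 σ := contDiff_infty.1 hσ 2
  have huσ : ContDiff ℝ 2 (fun s => u (σ s)) := hu.comp hσ2
  have curveInt : ∀ w : ℝ × ℝ → ℝ, ContDiff ℝ 1 w →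
      IntervalIntegrable (fun t => w (σ t) * deriv (fun s => u (σ s)) t) volume 0 L := fun w hw =>
    ((hw.continuous.comp hσ.continuous).mul
      (huσ.continuous_deriv (by norm_num))).intervalIntegrable _ _
  choose! f hf1 hf2 hf3 using hbump
  obtain ⟨T, hT1, hT2⟩ := hcomp.elim_nhds_subcover (fun p => interior {x | f p x = 1})
    (fun p hp => isOpen_interior.mem_nhds (mem_interior_iff_mem_nhds.2 (hf2 p hp)))
  -- functions vanishing near one of the sets
  have main : ∀ S : Finset (ℝ × ℝ), (∀ p ∈ S, p ∈ closure Ω) → ∀ w : ℝ × ℝ → ℝ, ContDiff ℝ 1 w →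
      (∀ x ∈ closure Ω, x ∉ (⋃ p ∈ S, interior {x | f p x = 1}) → ∀ᶠ y in nhds x, w y = 0) → 
      ∫ x in Ω, Jac w u x = ∫ t in (0 : ℝ)..L, w (σ t) * deriv (fun s => u (σ s)) t := by
    classical
    intro S
    induction S using Finset.induction_on with
    | empty =>
      intro _ w hw h0
      simp only [Finset.notMem_empty, Set.iUnion_of_empty, Set.iUnion_empty, Set.mem_empty_iff_false,
        not_false_eq_true, forall_true_left] at h0
      have a1 : ∀ t, w (σ t) = 0 := fun t => 
        (h0 (σ t) (by rw [hcl]; exact Or.inr ⟨t, rfl⟩)).self_of_nhds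
      have a2 : ∀ x ∈ Ω, Jac w u x = 0 := fun x hx => by
        apply Jac_eq_zero
        rw [notMem_tsupport_iff_eventuallyEq]
        exact h0 x (subset_closure hx)
      rw [setIntegral_congr_fun hΩ.measurableSet a2]
      simp [a1]
    | insert p S hp ih =>
      intro hS w hw h0
      have hpΩ := hS p (Finset.mem_insert_self _ _)
      have hfp := hf1 p hpΩ
      have hA : ContDiff ℝ 1 (fun x => f p x * w x) := hfp.mul hw
      have hB : ContDiff ℝ 1 (fun x => (1 - f p x) * w x) := (contDiff_const.sub hfp).mul hw
      have i1 := hf3 p hpΩ w hw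
      have i2 := ih (fun q hq => hS q (Finset.mem_insert_of_mem hq)) _ hB (by
        intro x hx hxS
        by_cases hxp : x ∈ interior {x | f p x = 1}
        · filter_upwards [mem_interior_iff_mem_nhds.1 hxp] with y hy
          have hy : f p y = 1 := hy
          simp [hy]
        · have := h0 x hx (by
            rw [Finset.set_biUnion_insert]
            rintro (h | h)
            · exact hxp h
            · exact hxS h)
          filter_upwards [this] with y hy
          simp [hy])
      have j : ∀ x, Jac w u x =
          Jac (fun x => f p x * w x) u x + Jac (fun x => (1 - f p x) * w x) u x := by
        intro x
        have : fderiv ℝ w x = fderiv ℝ (fun x => f p x * w x) x + 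
            fderiv ℝ (fun x => (1 - f p x) * w x) x := by
          rw [← fderiv_fun_add (hA.differentiable (by norm_num) x) (hB.differentiable (by norm_num) x)]
          congr 1
          ext y; ring
        simp only [Jac, this, add_apply]
        ring
      simp only [j]
      rw [integral_add (areaInt _ hA) (areaInt _ hB), i1, i2,
        ← intervalIntegral.integral_add (curveInt _ hA) (curveInt _ hB)]
      refine intervalIntegral.integral_congr fun t _ => ?_
      ring
  exact main T hT1 w hw fun x hx hxn => absurd (hT2 hx) hxn

theorem bdd_integrable {α : Type*} [MetricSpace α] [ProperSpace α] [MeasurableSpace α]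
    [BorelSpace α] {μ : Measure α} [IsFiniteMeasureOnCompacts μ] {S : Set α}
    (hS : Bornology.IsBounded S) {F : α → ℝ} (hF : Continuous F) : IntegrableOn F S μ :=
  (hF.continuousOn.integrableOn_compact hS.isCompact_closure).mono_set subset_closure

theorem swap_bdd_integral {α : Type*} [MetricSpace α] [ProperSpace α] [SecondCountableTopology α]
    [MeasurableSpace α] [BorelSpace α] (μ : Measure α) [IsFiniteMeasureOnCompacts μ] [SigmaFinite μ]
    {S : Set α} (hS : Bornology.IsBounded S) {F : α → ℝ → ℝ}
    (hF : Continuous (fun q : α × ℝ => F q.1 q.2)) {b : ℝ} (hb : 0 ≤ b) :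
    ∫ x in S, (∫ θ in (0 : ℝ)..b, F x θ) ∂μ = ∫ θ in (0 : ℝ)..b, ∫ x in S, F x θ ∂μ := by
  simp only [intervalIntegral.integral_of_le hb]
  apply integral_integral_swap
  rw [Measure.prod_restrict]
  exact bdd_integrable (hS.prod (Metric.isBounded_Ioc 0 b)) hF

theorem cont_param {α : Type*} [TopologicalSpace α] {F : α → ℝ → ℝ}
    (hF : Continuous (fun q : α × ℝ => F q.1 q.2)) (b : ℝ) :
    Continuous fun x => ∫ θ in (0 : ℝ)..b, F x θ :=
  intervalIntegral.continuous_parametric_intervalIntegral_of_continuous' hF _ _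

/-- the Pestov identity on a smooth bounded plane domain `Ω` whose
boundary is parametrized by a smooth, injective, unit-speed closed curve `σ` of period
`L` with outer unit normal `ν(t) = ((σ' t).2, −(σ' t).1)`: for `u ∈ C²(S Ω̄)`,
`‖VXu‖² = ‖XVu‖² + ‖Xu‖² + ⟨∇_T u, Vu⟩_{L²(∂SΩ)}`, where the tangential derivative
along the boundary is `∇_T u(σ t, θ) = (d/dt) u(σ t, θ)`. -/
theorem stmt15 (Ω : Set (ℝ × ℝ)) (hΩ : IsOpen Ω) (hbdd : Bornology.IsBounded Ω)
    (L : ℝ) (hL : 0 < L) (σ : ℝ → ℝ × ℝ) (hσ : ContDiff ℝ (⊤ : ℕ∞) σ)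
    (hσper : ∀ t, σ (t + L) = σ t) (hσinj : Set.InjOn σ (Set.Ico 0 L))
    (hσspeed : ∀ t, (deriv σ t).1 ^ 2 + (deriv σ t).2 ^ 2 = 1)
    (hσrange : frontier Ω = Set.range σ)
    (hσouter : ∀ t : ℝ, ∃ ε > 0, ∀ h ∈ Set.Ioo (0 : ℝ) ε,
      σ t + h • ((deriv σ t).2, -(deriv σ t).1) ∉ closure Ω)
    (u : ℝ × ℝ → ℝ → ℝ) (hu : ContDiff ℝ 2 (fun q : (ℝ × ℝ) × ℝ => u q.1 q.2))
    (huper : ∀ x θ, u x (θ + 2 * Real.pi) = u x θ) :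
    (∫ x in Ω, ∫ θ in (0 : ℝ)..(2 * Real.pi),
        (Vop (fun y φ => Xop u y φ) x θ) ^ 2) =
      (∫ x in Ω, ∫ θ in (0 : ℝ)..(2 * Real.pi),
        (Xop (fun y φ => Vop u y φ) x θ) ^ 2) +
      (∫ x in Ω, ∫ θ in (0 : ℝ)..(2 * Real.pi), (Xop u x θ) ^ 2) +
      ∫ t in (0 : ℝ)..L, ∫ θ in (0 : ℝ)..(2 * Real.pi),
        (deriv (fun s => u (σ s) θ) t) * Vop u (σ t) θ := by
  set U : (ℝ × ℝ) × ℝ → ℝ := fun q => u q.1 q.2 with hU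
  have hD1 : ContDiff ℝ 1 (fderiv ℝ U) := hu.fderiv_right (by norm_num)
  have hD1d : Differentiable ℝ (fderiv ℝ U) := hD1.differentiable (by norm_num)
  have hUd : Differentiable ℝ U := hu.differentiable (by norm_num)
  have hD1c : Continuous (fderiv ℝ U) := hD1.continuous
  have hD2c : Continuous (fderiv ℝ (fderiv ℝ U)) := hD1.continuous_fderiv (by norm_num)
  have hpi : (0 : ℝ) ≤ 2 * Real.pi := by positivity
  let e1 : (ℝ × ℝ) × ℝ := ((1, 0), 0)
  let e2 : (ℝ × ℝ) × ℝ := ((0, 1), 0)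
  let e3 : (ℝ × ℝ) × ℝ := ((0, 0), 1)
  let A1 : (ℝ × ℝ) × ℝ → ℝ := fun q => fderiv ℝ U q e1
  let A2 : (ℝ × ℝ) × ℝ → ℝ := fun q => fderiv ℝ U q e2
  let W : (ℝ × ℝ) × ℝ → ℝ := fun q => fderiv ℝ U q e3
  let B1 : (ℝ × ℝ) × ℝ → ℝ := fun q => fderiv ℝ (fderiv ℝ U) q e3 e1
  let B2 : (ℝ × ℝ) × ℝ → ℝ := fun q => fderiv ℝ (fderiv ℝ U) q e3 e2
  have hA1c : Continuous A1 := hD1c.clm_apply continuous_const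
  have hA2c : Continuous A2 := hD1c.clm_apply continuous_const
  have hWc : Continuous W := hD1c.clm_apply continuous_const
  have hB1c : Continuous B1 := (hD2c.clm_apply continuous_const).clm_apply continuous_const
  have hB2c : Continuous B2 := (hD2c.clm_apply continuous_const).clm_apply continuous_const
  have hW1 : ContDiff ℝ 1 W := hD1.clm_apply contDiff_const
  have hsymm : ∀ q v v', fderiv ℝ (fderiv ℝ U) q v v' = fderiv ℝ (fderiv ℝ U) q v' v := fun q v v' =>
    (hu.contDiffAt (x := q)).isSymmSndFDerivAt (by simp) v v'
  have sliceX : ∀ (G : (ℝ × ℝ) × ℝ → ℝ), Differentiable ℝ G → ∀ x θ v,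
      fderiv ℝ (fun y => G (y, θ)) x v = fderiv ℝ G (x, θ) (v, 0) := by
    intro G hG x θ v
    have := (hG (x, θ)).hasFDerivAt.comp x (hasFDerivAt_prodMk_left (𝕜 := ℝ) x θ)
    rw [show fderiv ℝ (fun y => G (y, θ)) x = _ from this.fderiv]
    simp
  have sliceT : ∀ (G : (ℝ × ℝ) × ℝ → ℝ), Differentiable ℝ G → ∀ x θ,
      HasDerivAt (fun φ => G (x, φ)) (fderiv ℝ G (x, θ) e3) θ := by
    intro G hG x θ
    have h2 : HasDerivAt (fun φ : ℝ => (x, φ)) e3 θ :=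
      (hasDerivAt_const θ x).prodMk (hasDerivAt_id θ)
    exact (hG (x, θ)).hasFDerivAt.comp_hasDerivAt θ h2
  have appD : ∀ v q v', fderiv ℝ (fun q => fderiv ℝ U q v) q v' =
      fderiv ℝ (fderiv ℝ U) q v' v := by
    intro v q v'
    have := (hD1d q).hasFDerivAt.clm_apply (hasFDerivAt_const v q)
    rw [this.fderiv]
    simp
  have hA1d : Differentiable ℝ A1 := fun q => (hD1d q).clm_apply (differentiableAt_const _)
  have hA2d : Differentiable ℝ A2 := fun q => (hD1d q).clm_apply (differentiableAt_const _)
  have hWd : Differentiable ℝ W := hW1.differentiable (by norm_num)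
  have dA1 : ∀ x θ, HasDerivAt (fun φ => A1 (x, φ)) (B1 (x, θ)) θ := by
    intro x θ
    have := sliceT A1 hA1d x θ
    rwa [appD] at this
  have dA2 : ∀ x θ, HasDerivAt (fun φ => A2 (x, φ)) (B2 (x, θ)) θ := by
    intro x θ
    have := sliceT A2 hA2d x θ
    rwa [appD] at this
  have ux1 : ∀ x θ, fderiv ℝ (fun y => u y θ) x (1, 0) = A1 (x, θ) := fun x θ => sliceX U hUd x θ _
  have ux2 : ∀ x θ, fderiv ℝ (fun y => u y θ) x (0, 1) = A2 (x, θ) := fun x θ => sliceX U hUd x θ _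
  have hV : ∀ x θ, Vop u x θ = W (x, θ) := fun x θ => (sliceT U hUd x θ).deriv
  have wx1 : ∀ x θ, fderiv ℝ (fun y => W (y, θ)) x (1, 0) = B1 (x, θ) := fun x θ => by
    rw [sliceX W hWd, appD, hsymm]
  have wx2 : ∀ x θ, fderiv ℝ (fun y => W (y, θ)) x (0, 1) = B2 (x, θ) := fun x θ => by
    rw [sliceX W hWd, appD, hsymm]
  have hX : ∀ x θ, Xop u x θ = Real.cos θ * A1 (x, θ) + Real.sin θ * A2 (x, θ) := fun x θ => by
    rw [Xop, ux1, ux2]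
  have hXV : ∀ x θ, Xop (fun y φ => Vop u y φ) x θ =
      Real.cos θ * B1 (x, θ) + Real.sin θ * B2 (x, θ) := fun x θ => by
    simp only [hV, Xop, wx1, wx2]
  have dX : ∀ x θ, HasDerivAt (fun φ => Real.cos φ * A1 (x, φ) + Real.sin φ * A2 (x, φ))
      (-Real.sin θ * A1 (x, θ) + Real.cos θ * B1 (x, θ) +
        (Real.cos θ * A2 (x, θ) + Real.sin θ * B2 (x, θ))) θ := fun x θ =>
    ((Real.hasDerivAt_cos θ).mul (dA1 x θ)).add ((Real.hasDerivAt_sin θ).mul (dA2 x θ))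
  have dY : ∀ x θ, HasDerivAt (fun φ => -Real.sin φ * A1 (x, φ) + Real.cos φ * A2 (x, φ))
      (-Real.cos θ * A1 (x, θ) + -Real.sin θ * B1 (x, θ) +
        (-Real.sin θ * A2 (x, θ) + Real.cos θ * B2 (x, θ))) θ := fun x θ =>
    ((Real.hasDerivAt_sin θ).neg.mul (dA1 x θ)).add ((Real.hasDerivAt_cos θ).mul (dA2 x θ))
  have hVX : ∀ x θ, Vop (fun y φ => Xop u y φ) x θ =
      -Real.sin θ * A1 (x, θ) + Real.cos θ * B1 (x, θ) +
        (Real.cos θ * A2 (x, θ) + Real.sin θ * B2 (x, θ)) := fun x θ => by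
    simp only [hX, Vop]
    exact (dX x θ).deriv
  have perA : ∀ x v, fderiv ℝ (fun y => u y (2 * Real.pi)) x v = fderiv ℝ (fun y => u y 0) x v := by
    intro x v
    have : (fun y => u y (2 * Real.pi)) = fun y => u y 0 := by
      ext y
      have := huper y 0
      rwa [zero_add] at this
    rw [this]
  -- continuous integrands
  let F1 : ℝ × ℝ → ℝ → ℝ := fun x θ => (-Real.sin θ * A1 (x, θ) + Real.cos θ * B1 (x, θ) +
        (Real.cos θ * A2 (x, θ) + Real.sin θ * B2 (x, θ))) ^ 2
  let F2 : ℝ × ℝ → ℝ → ℝ := fun x θ => (Real.cos θ * B1 (x, θ) + Real.sin θ * B2 (x, θ)) ^ 2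
  let F3 : ℝ × ℝ → ℝ → ℝ := fun x θ => (Real.cos θ * A1 (x, θ) + Real.sin θ * A2 (x, θ)) ^ 2
  let F4 : ℝ × ℝ → ℝ → ℝ := fun x θ => B1 (x, θ) * A2 (x, θ) - B2 (x, θ) * A1 (x, θ)
  have cF1 : Continuous (fun q : (ℝ × ℝ) × ℝ => F1 q.1 q.2) := by simp only [F1]; fun_prop
  have cF2 : Continuous (fun q : (ℝ × ℝ) × ℝ => F2 q.1 q.2) := by simp only [F2]; fun_prop
  have cF3 : Continuous (fun q : (ℝ × ℝ) × ℝ => F3 q.1 q.2) := by simp only [F3]; fun_prop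
  have cF4 : Continuous (fun q : (ℝ × ℝ) × ℝ => F4 q.1 q.2) := by simp only [F4]; fun_prop
  have ii : ∀ {F : ℝ × ℝ → ℝ → ℝ}, Continuous (fun q : (ℝ × ℝ) × ℝ => F q.1 q.2) → ∀ x,
      IntervalIntegrable (F x) volume 0 (2 * Real.pi) := by
    intro F hF x
    have : Continuous (F x) := hF.comp (Continuous.prodMk_right x)
    exact this.intervalIntegrable _ _
  have pointwise : ∀ x, ∫ θ in (0 : ℝ)..(2 * Real.pi), F1 x θ =
      (∫ θ in (0 : ℝ)..(2 * Real.pi), F2 x θ) + (∫ θ in (0 : ℝ)..(2 * Real.pi), F3 x θ) +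
        ∫ θ in (0 : ℝ)..(2 * Real.pi), F4 x θ := by
    intro x
    have hz := intervalIntegral.integral_eq_sub_of_hasDerivAt (a := 0) (b := 2 * Real.pi)
      (f := fun φ => (-Real.sin φ * A1 (x, φ) + Real.cos φ * A2 (x, φ)) *
        (Real.cos φ * A1 (x, φ) + Real.sin φ * A2 (x, φ)))
      (f' := fun θ => F1 x θ - (F2 x θ + F3 x θ + F4 x θ))
      (fun θ _ => by
        refine HasDerivAt.congr_deriv ((dY x θ).mul (dX x θ)) ?_
        have hcs := Real.sin_sq_add_cos_sq θ
        simp only [F1, F2, F3, F4]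
        linear_combination -(B1 (x, θ) * A2 (x, θ) - B2 (x, θ) * A1 (x, θ)) * hcs)
      ((ii cF1 x).sub (((ii cF2 x).add (ii cF3 x)).add (ii cF4 x)))
    rw [intervalIntegral.integral_sub (ii cF1 x) (((ii cF2 x).add (ii cF3 x)).add (ii cF4 x)),
      intervalIntegral.integral_add ((ii cF2 x).add (ii cF3 x)) (ii cF4 x),
      intervalIntegral.integral_add (ii cF2 x) (ii cF3 x)] at hz
    have p1 : A1 (x, 2 * Real.pi) = A1 (x, 0) := by rw [← ux1, ← ux1, perA]
    have p2 : A2 (x, 2 * Real.pi) = A2 (x, 0) := by rw [← ux2, ← ux2, perA]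
    simp only [p1, p2, Real.sin_two_pi, Real.cos_two_pi, Real.sin_zero, Real.cos_zero,
      sub_self] at hz
    linarith
  -- Green
  have hgreen : ∀ θ, ∫ x in Ω, F4 x θ =
      ∫ t in (0 : ℝ)..L, W (σ t, θ) * deriv (fun s => u (σ s) θ) t := by
    intro θ
    have hwθ : ContDiff ℝ 1 (fun y => W (y, θ)) := hW1.comp (contDiff_prodMk_left θ)
    have huθ : ContDiff ℝ 2 (fun y => u y θ) := hu.comp (contDiff_prodMk_left θ)
    have := green Ω hΩ hbdd L hL σ hσ hσper hσinj hσspeed hσrange hσouter hwθ huθ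
    rw [← this]
    simp only [Jac, wx1, wx2, ux1, ux2, F4]
  have hderiv : ∀ t θ, deriv (fun s => u (σ s) θ) t =
      fderiv ℝ U (σ t, θ) (deriv σ t, 0) := by
    intro t θ
    have h1 : HasDerivAt (fun s => (σ s, θ)) (deriv σ t, 0) t :=
      (hσ.differentiable (by simp) t).hasDerivAt.prodMk (hasDerivAt_const t θ)
    exact ((hUd (σ t, θ)).hasFDerivAt.comp_hasDerivAt t h1).deriv
  have hσc : Continuous σ := hσ.continuous
  have hσ'c : Continuous (deriv σ) := hσ.continuous_deriv (by exact_mod_cast le_top)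
  let F5 : ℝ → ℝ → ℝ := fun t θ => fderiv ℝ U (σ t, θ) (deriv σ t, 0) * W (σ t, θ)
  have cF5 : Continuous (fun q : ℝ × ℝ => F5 q.1 q.2) := by simp only [F5]; fun_prop
  simp only [hVX, hXV]
  simp only [hX, hV, hderiv]
  change (∫ x in Ω, ∫ θ in (0 : ℝ)..(2 * Real.pi), F1 x θ) =
    (∫ x in Ω, ∫ θ in (0 : ℝ)..(2 * Real.pi), F2 x θ) +
    (∫ x in Ω, ∫ θ in (0 : ℝ)..(2 * Real.pi), F3 x θ) +
    ∫ t in (0 : ℝ)..L, ∫ θ in (0 : ℝ)..(2 * Real.pi), F5 t θ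
  have i2 := bdd_integrable (μ := volume) hbdd (cont_param cF2 (2 * Real.pi))
  have i3 := bdd_integrable (μ := volume) hbdd (cont_param cF3 (2 * Real.pi))
  have i4 := bdd_integrable (μ := volume) hbdd (cont_param cF4 (2 * Real.pi))
  simp only [pointwise]
  have i23 : IntegrableOn (fun x => (∫ θ in (0 : ℝ)..(2 * Real.pi), F2 x θ) +
      ∫ θ in (0 : ℝ)..(2 * Real.pi), F3 x θ) Ω volume := i2.add i3
  rw [integral_add i23 i4, integral_add i2 i3]
  congr 1
  rw [swap_bdd_integral volume hbdd cF4 hpi, intervalIntegral.integral_of_le hL.le,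
    swap_bdd_integral volume (Metric.isBounded_Ioc 0 L) cF5 hpi]
  refine intervalIntegral.integral_congr fun θ _ => ?_
  simp only [hgreen, ← intervalIntegral.integral_of_le hL.le, F5, hderiv]
  refine intervalIntegral.integral_congr fun t _ => ?_
  ring
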